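/- For every integer k ≥ 1, every real number a not of the form -j/2 with j a nonnegative integer, and every real z with 0 < z < 1: Φ_HCB(1-k,a,z) = (4^a / (C(2a,a)·a^{1-k})) · z^{2a} · _{k+1}F_k(1, a+1, …, a+1 ; a+1/2, a, …, a ; z²), where the upper parameter list consists of 1 followed by k copies of a+1, and the lower parameter list consists of a+1/2 followed by k-1 copies of a. -/

import Mathlib

/-- The generalized binomial coefficient `C(x,y) = Γ(x+1)/(Γ(y+1) Γ(x-y+1))`. -/
noncomputable def genBinom (x y : ℝ) : ℝ :=
  Real.Gamma (x + 1) / (Real.Gamma (y + 1) * Real.Gamma (x - y + 1))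

/-- The Hurwitz–Lerch type central binomial series
`Φ_HCB(s,a,z) = ∑_{n≥0} (2z)^{2(n+a)} / ( C(2(n+a), n+a) (n+a)^s )`. -/
noncomputable def PhiHCB (s : ℤ) (a z : ℝ) : ℝ :=
  ∑' n : ℕ, (2 * z) ^ (2 * ((n : ℝ) + a)) /
    (genBinom (2 * ((n : ℝ) + a)) ((n : ℝ) + a) * ((n : ℝ) + a) ^ s)

/-- The shifted factorial (Pochhammer symbol) `(α)_n = α(α+1)⋯(α+n-1)`, `(α)_0 = 1`. -/
def poch (α : ℝ) : ℕ → ℝ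
  | 0 => 1
  | n + 1 => poch α n * (α + n)

/-- The generalized hypergeometric series with upper parameters `as`, lower parameters `bs`:
`∑_{n≥0} (∏_{α ∈ as} (α)_n) / ((∏_{β ∈ bs} (β)_n) n!) zⁿ`. -/
noncomputable def pFq (as bs : List ℝ) (z : ℝ) : ℝ :=
  ∑' n : ℕ, (as.map fun α => poch α n).prod / ((bs.map fun β => poch β n).prod *
    (Nat.factorial n : ℝ)) * z ^ n

theorem poch_one (n : ℕ) : poch 1 n = (n.factorial : ℝ) := by
  induction n with
  | zero => simp [poch]
  | succ n ih =>
    rw [poch, ih, Nat.factorial_succ]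
    push_cast
    ring

theorem poch_ne_zero {α : ℝ} (h : ∀ j : ℕ, α + j ≠ 0) (n : ℕ) : poch α n ≠ 0 := by
  induction n with
  | zero => simp [poch]
  | succ n ih => exact mul_ne_zero ih (h n)

theorem mul_poch_add_one (α : ℝ) (n : ℕ) : α * poch (α + 1) n = poch α n * (n + α) := by
  induction n with
  | zero => simp [poch]
  | succ n ih =>
    rw [poch, poch, ← mul_assoc, ih]
    push_cast
    ring

theorem genBinom_two_mul_add_one {x : ℝ} (h₁ : x + 1 ≠ 0) (h₂ : 2 * x + 1 ≠ 0) :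
    genBinom (2 * (x + 1)) (x + 1) = genBinom (2 * x) x * (4 * (x + 1 / 2) / (x + 1)) := by
  have h₃ : 2 * x + 2 ≠ 0 := by
    contrapose h₁
    linarith
  have hnum : Real.Gamma (2 * (x + 1) + 1) =
      (2 * x + 2) * ((2 * x + 1) * Real.Gamma (2 * x + 1)) := by
    rw [← Real.Gamma_add_one h₂, show 2 * x + 1 + 1 = 2 * x + 2 by ring,
      ← Real.Gamma_add_one h₃]
    ring_nf
  have hden : Real.Gamma (x + 1 + 1) = (x + 1) * Real.Gamma (x + 1) := Real.Gamma_add_one h₁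
  unfold genBinom
  rw [show 2 * (x + 1) - (x + 1) + 1 = x + 1 + 1 by ring, show 2 * x - x + 1 = x + 1 by ring,
    hnum, hden]
  by_cases hΓ : Real.Gamma (x + 1) = 0
  · simp [hΓ]
  · field_simp
    ring

/-- The values `4 ^ x / C(2x, x)` at `x = n + a`, in terms of the value at `x = a`. -/
theorem four_rpow_div_genBinom_add_nat {a : ℝ} (ha : ∀ j : ℕ, a ≠ -(j : ℝ) / 2) (n : ℕ) :
    (4 : ℝ) ^ ((n : ℝ) + a) / genBinom (2 * ((n : ℝ) + a)) ((n : ℝ) + a) =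
      (4 : ℝ) ^ a / genBinom (2 * a) a * (poch (a + 1) n / poch (a + 1 / 2) n) := by
  induction n with
  | zero => simp [poch]
  | succ n ih =>
    have h₁ : (n : ℝ) + a + 1 ≠ 0 := fun h => ha (2 * n + 2) (by push_cast; linarith)
    have h₂ : 2 * ((n : ℝ) + a) + 1 ≠ 0 := fun h => ha (2 * n + 1) (by push_cast; linarith)
    rw [Nat.cast_succ, show (n : ℝ) + 1 + a = n + a + 1 by ring,
      genBinom_two_mul_add_one h₁ h₂, Real.rpow_add_one (by norm_num), poch, poch]
    calc (4 : ℝ) ^ ((n : ℝ) + a) * 4 / (genBinom (2 * ((n : ℝ) + a)) ((n : ℝ) + a) *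
          (4 * ((n : ℝ) + a + 1 / 2) / ((n : ℝ) + a + 1)))
        = (4 : ℝ) ^ ((n : ℝ) + a) / genBinom (2 * ((n : ℝ) + a)) ((n : ℝ) + a) *
          (((n : ℝ) + a + 1) / ((n : ℝ) + a + 1 / 2)) := by
          simp only [div_eq_mul_inv, mul_inv, inv_inv]
          ring
      _ = _ := by
          rw [ih, show a + 1 + (n : ℝ) = n + a + 1 by ring,
            show a + 1 / 2 + (n : ℝ) = n + a + 1 / 2 by ring]
          simp only [div_eq_mul_inv, mul_inv]
          ring

/-- For every integer `k ≥ 1`, real `a` not of the form `-j/2` (`j ∈ ℤ_{≥0}`), and `0 < z < 1`: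
`Φ_HCB(1-k,a,z) = (4^a/(C(2a,a) a^{1-k})) z^{2a}
  ⬝ _{k+1}F_k(1, a+1, …, a+1 ; a+1/2, a, …, a ; z²)`,
where the upper parameters are `1` followed by `k` copies of `a+1` and the lower parameters are
`a+1/2` followed by `k-1` copies of `a`. -/
theorem phiHCB_nonpos_hypergeometric (k : ℕ) (hk : 1 ≤ k) (a : ℝ)
    (ha : ∀ j : ℕ, a ≠ -(j : ℝ) / 2) (z : ℝ) (hz0 : 0 < z) (hz1 : z < 1) :
    PhiHCB (1 - k) a z =
      (4 : ℝ) ^ a / (genBinom (2 * a) a * a ^ ((1 : ℤ) - k)) * z ^ (2 * a) *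
        pFq ((1 : ℝ) :: List.replicate k (a + 1))
          ((a + 1 / 2) :: List.replicate (k - 1) a) (z ^ 2) := by
  have hpoch : ∀ n, poch a n ≠ 0 :=
    poch_ne_zero fun j h => ha (2 * j) (by push_cast; linarith)
  obtain ⟨m, rfl⟩ := Nat.exists_eq_add_of_le' hk
  have hexp : (1 : ℤ) - ((m + 1 : ℕ) : ℤ) = -(m : ℤ) := by push_cast; ring
  rw [PhiHCB, pFq, ← tsum_mul_left]
  refine tsum_congr fun n => ?_
  have hshift : ((n : ℝ) + a) ^ m = a ^ m * (poch (a + 1) n ^ m / poch a n ^ m) := by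
    rw [← mul_div_assoc, ← mul_pow, mul_poch_add_one, mul_pow,
      mul_div_cancel_left₀ _ (pow_ne_zero m (hpoch n))]
  have hpow : (2 * z) ^ (2 * ((n : ℝ) + a)) =
      (4 : ℝ) ^ ((n : ℝ) + a) * (z ^ (2 * a) * (z ^ 2) ^ n) := by
    rw [Real.mul_rpow (by norm_num) hz0.le, Real.rpow_mul (by norm_num),
      show 2 * ((n : ℝ) + a) = 2 * a + ((2 * n : ℕ) : ℝ) by push_cast; ring,
      Real.rpow_add_natCast hz0.ne', pow_mul]
    norm_num
  have hfact : (n.factorial : ℝ) ≠ 0 := Nat.cast_ne_zero.mpr n.factorial_ne_zero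
  rw [hexp, zpow_neg, zpow_neg, zpow_natCast, zpow_natCast, hpow]
  simp only [List.map_cons, List.map_replicate, List.prod_cons, List.prod_replicate, poch_one,
    Nat.add_sub_cancel]
  calc (4 : ℝ) ^ ((n : ℝ) + a) * (z ^ (2 * a) * (z ^ 2) ^ n) /
        (genBinom (2 * ((n : ℝ) + a)) ((n : ℝ) + a) * (((n : ℝ) + a) ^ m)⁻¹)
      = (4 : ℝ) ^ ((n : ℝ) + a) / genBinom (2 * ((n : ℝ) + a)) ((n : ℝ) + a) *
          ((n : ℝ) + a) ^ m * (z ^ (2 * a) * (z ^ 2) ^ n) := by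
        simp only [div_eq_mul_inv, mul_inv, inv_inv]
        ring
    _ = (4 : ℝ) ^ a / genBinom (2 * a) a * (poch (a + 1) n / poch (a + 1 / 2) n) *
          (a ^ m * (poch (a + 1) n ^ m / poch a n ^ m)) * (z ^ (2 * a) * (z ^ 2) ^ n) := by
        rw [four_rpow_div_genBinom_add_nat ha, hshift]
    _ = (4 : ℝ) ^ a / (genBinom (2 * a) a * (a ^ m)⁻¹) * z ^ (2 * a) *
          (poch (a + 1) n ^ (m + 1) / (poch (a + 1 / 2) n * poch a n ^ m) *
            (z ^ 2) ^ n) := by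
        simp only [div_eq_mul_inv, mul_inv, inv_inv]
        ring
    _ = _ := by
        rw [mul_comm (n.factorial : ℝ), mul_div_mul_right _ _ hfact]
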